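/- arXiv:1605.03266 — 10 statements merged into one kernel-verified Lean document; each statement's English description precedes it below -/
import Mathlib

section
/- Let n be a positive natural number and let s be the outmap of a unique sink orientation (USO) of the n-dimensional hypercube. Then for every set of directions Λ ⊆ Fin n (as a Finset), the map s' defined by s'(v) = Λ Δ s(v) is again the outmap of a unique sink orientation of the n-dimensional hypercube. -/
/-- An outmap `s` is the outmap of an orientation of the `n`-cube if for every
vertex `v` and every direction `lam`, the `lam`-edge at `v` is outgoing at `v`
iff it is incoming at the neighbor `v Δ {lam}`. -/
def IsOrientation (n : ℕ) (s : Finset (Fin n) → Finset (Fin n)) : Prop :=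
  ∀ (v : Finset (Fin n)) (lam : Fin n), lam ∈ s v ↔ lam ∉ s (symmDiff v {lam})

/-- An outmap `s` is a unique sink orientation (USO) of the `n`-cube if it is
the outmap of an orientation and every subcube `[u : w]` has a unique sink. -/
def IsUSO (n : ℕ) (s : Finset (Fin n) → Finset (Fin n)) : Prop :=
  IsOrientation n s ∧
    ∀ u w : Finset (Fin n), u ⊆ w →
      ∃! x : Finset (Fin n), u ⊆ x ∧ x ⊆ w ∧ s x ∩ (w \ u) = ∅

theorem uso_flip_one (n : ℕ) (s : Finset (Fin n) → Finset (Fin n)) (hs : IsUSO n s)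
    (l : Fin n) : IsUSO n (fun v => symmDiff {l} (s v)) := by
  obtain ⟨ho, hu⟩ := hs
  refine ⟨?_, ?_⟩
  · intro v m
    have := ho v m
    simp only [Finset.mem_symmDiff, Finset.mem_singleton]
    tauto
  have key : ∀ (t : Finset (Fin n)) (u w : Finset (Fin n)),
      t ∩ (w \ u) = ∅ ↔ ∀ m ∈ t, m ∈ w → m ∈ u := by
    intro t u w
    simp only [Finset.ext_iff, Finset.mem_inter, Finset.mem_sdiff, Finset.notMem_empty,
      iff_false]
    constructor
    · intro h m h1 h2
      have := h m
      tauto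
    · intro h m
      have := h m
      tauto
  intro u w huw
  simp only [key] at hu ⊢
  by_cases hl : l ∈ w ∧ l ∉ u
  swap
  · have e : ∀ x : Finset (Fin n), (∀ m ∈ symmDiff {l} (s x), m ∈ w → m ∈ u) ↔
        (∀ m ∈ s x, m ∈ w → m ∈ u) := by
      intro x
      refine forall_congr' fun m => ?_
      simp only [Finset.mem_symmDiff, Finset.mem_singleton]
      by_cases hm : m = l
      · subst hm; tauto
      · tauto
    simp only [e]
    exact hu u w huw
  obtain ⟨hlw, hlu⟩ := hl
  have e : ∀ x : Finset (Fin n), (∀ m ∈ symmDiff {l} (s x), m ∈ w → m ∈ u) ↔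
      (l ∈ s x ∧ ∀ m ∈ s x, m ∈ w → m ≠ l → m ∈ u) := by
    intro x
    simp only [Finset.mem_symmDiff, Finset.mem_singleton]
    constructor
    · intro h
      refine ⟨?_, ?_⟩
      · have := h l; tauto
      · intro m; have := h m; tauto
    · rintro ⟨h, h'⟩ m
      have := h' m
      by_cases hm : m = l
      · subst hm; tauto
      · tauto
  simp only [e]
  obtain ⟨z, ⟨hz1, hz2, hz3⟩, hzu⟩ := hu u w huw
  obtain ⟨a, ⟨ha1, ha2, ha3⟩, hau⟩ := hu u (w.erase l) (by grind)
  obtain ⟨b, ⟨hb1, hb2, hb3⟩, hbu⟩ := hu (insert l u) w (by grind)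
  have hal : l ∉ a := by grind
  have hbl : l ∈ b := by grind
  have haw : a ⊆ w := by grind
  have hub : u ⊆ b := by grind
  -- every vertex whose outmap restricted to the other directions vanishes is `a` or `b`
  have hab : ∀ y, u ⊆ y → y ⊆ w → (∀ m ∈ s y, m ∈ w → m ≠ l → m ∈ u) → y = a ∨ y = b := by
    intro y h1 h2 h3
    by_cases hy : l ∈ y
    · right; exact hbu y ⟨by grind, h2, by grind⟩
    · left; exact hau y ⟨h1, by grind, by grind⟩
  have ha4 : ∀ m ∈ s a, m ∈ w → m ≠ l → m ∈ u := by grind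
  have hb4 : ∀ m ∈ s b, m ∈ w → m ≠ l → m ∈ u := by grind
  have hne : a ≠ b := by rintro rfl; exact hal hbl
  have hzl : l ∉ s z := fun h => hlu (hz3 l h hlw)
  have hsink : ∀ y, u ⊆ y → y ⊆ w → (∀ m ∈ s y, m ∈ w → m ≠ l → m ∈ u) → l ∉ s y → y = z := by
    intro y h1 h2 h3 h4
    exact hzu y ⟨h1, h2, by grind⟩
  rcases hab z hz1 hz2 (fun m h1 h2 _ => hz3 m h1 h2) with h | h
  · have hb : l ∈ s b := by
      by_contra hb
      exact hne (h ▸ (hsink b hub hb2 hb4 hb).symm)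
    refine ⟨b, ⟨hub, hb2, hb, hb4⟩, ?_⟩
    rintro y ⟨h1, h2, h3, h4⟩
    rcases hab y h1 h2 h4 with h5 | h5
    · exact absurd h3 (by rw [h5, ← h]; exact hzl)
    · exact h5
  · have ha : l ∈ s a := by
      by_contra ha
      exact hne (h ▸ (hsink a ha1 haw ha4 ha))
    refine ⟨a, ⟨ha1, haw, ha, ha4⟩, ?_⟩
    rintro y ⟨h1, h2, h3, h4⟩
    rcases hab y h1 h2 h4 with h5 | h5
    · exact h5
    · exact absurd h3 (by rw [h5, ← h]; exact hzl)

/-- Reversing all edges in every direction of a set Λ of directions of a USO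
yields again a USO. -/
theorem uso_flip_direction_set (n : ℕ) (hn : 0 < n)
    (s : Finset (Fin n) → Finset (Fin n)) (hs : IsUSO n s)
    (Λ : Finset (Fin n)) :
    IsUSO n (fun v => symmDiff Λ (s v)) := by
  induction Λ using Finset.induction_on with
  | empty =>
    have : (fun v => symmDiff ∅ (s v)) = s := by
      funext v
      exact bot_symmDiff (s v)
    rw [this]; exact hs
  | insert l Λ hl ih =>
    have : (fun v => symmDiff (insert l Λ) (s v)) =
        (fun v => symmDiff {l} (symmDiff Λ (s v))) := by
      funext v
      rw [← symmDiff_assoc]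
      congr 1
      ext m
      simp only [Finset.mem_symmDiff, Finset.mem_singleton, Finset.mem_insert]
      by_cases hm : m = l
      · subst hm; tauto
      · tauto
    rw [this]
    exact uso_flip_one n _ ih l
end

section
/- Let n be a positive natural number, let s be the outmap of a unique sink orientation (USO) of the n-dimensional hypercube, and let λ : Fin n be a single direction. Then the map s' defined by s'(v) = {λ} Δ s(v) (i.e., the orientation obtained from reversing all edges in direction λ) is again the outmap of a unique sink orientation of the n-dimensional hypercube. -/
/-- Reversing all edges in a single direction lam of a USO yields again a USO. -/
theorem uso_flip_single_direction (n : ℕ) (hn : 0 < n)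
    (s : Finset (Fin n) → Finset (Fin n)) (hs : IsUSO n s)
    (lam : Fin n) :
    IsUSO n (fun v => symmDiff {lam} (s v)) := by
  obtain ⟨ho, hu⟩ := hs
  refine ⟨?_, ?_⟩
  · intro v m
    have h := ho v m
    simp only [Finset.mem_symmDiff, Finset.mem_singleton]
    tauto
  intro u w huw
  have key : ∀ x u w : Finset (Fin n), s x ∩ (w \ u) = ∅ ↔
      ∀ i, i ∈ s x → i ∈ w → i ∈ u := by
    intro x u w
    simp only [Finset.eq_empty_iff_forall_notMem, Finset.mem_inter, Finset.mem_sdiff]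
    exact forall_congr' fun i => by tauto
  have key' : ∀ x u w : Finset (Fin n), symmDiff {lam} (s x) ∩ (w \ u) = ∅ ↔
      ∀ i, (i ≠ lam → i ∈ s x → i ∈ w → i ∈ u) ∧ (i = lam → i ∉ s x → i ∈ w → i ∈ u) := by
    intro x u w
    simp only [Finset.eq_empty_iff_forall_notMem, Finset.mem_inter, Finset.mem_sdiff,
      Finset.mem_symmDiff, Finset.mem_singleton]
    exact forall_congr' fun i => by tauto
  simp only [key'] 
  simp only [key] at hu
  by_cases hl : lam ∈ w ∧ lam ∉ u
  · obtain ⟨hw, hlu⟩ := hl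
    obtain ⟨x, ⟨hx1, hx2, hx3⟩, hx⟩ := hu u w huw
    obtain ⟨a, ⟨ha1, ha2, ha3⟩, ha⟩ := hu u (w.erase lam) (by grind)
    obtain ⟨b, ⟨hb1, hb2, hb3⟩, hb⟩ := hu (insert lam u) w (by grind)
    dsimp only at hx ha hb
    have hla : lam ∉ a := by grind
    have hlb : lam ∈ b := by grind
    have A : ∀ y, u ⊆ y → y ⊆ w → lam ∉ y → (∀ i, i ≠ lam → i ∈ s y → i ∈ w → i ∈ u) → y = a := by
      intro y h1 h2 h3 h4
      exact ha y ⟨h1, by grind, by grind⟩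
    have B : ∀ y, u ⊆ y → y ⊆ w → lam ∈ y → (∀ i, i ≠ lam → i ∈ s y → i ∈ w → i ∈ u) → y = b := by
      intro y h1 h2 h3 h4
      exact hb y ⟨by grind, h2, by grind⟩
    have hub : u ⊆ b := by grind
    have haw : a ⊆ w := by grind
    have hxl : lam ∉ s x := fun h => hlu (hx3 _ h hw)
    have ha4 : lam ∉ s a → a = x := fun h => hx a ⟨ha1, haw, by grind⟩
    have hb4 : lam ∉ s b → b = x := fun h => hx b ⟨hub, hb2, by grind⟩
    have hab : a ≠ b := by rintro rfl; exact hla hlb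
    by_cases hlx : lam ∈ x
    · have e := B x hx1 hx2 hlx (fun i _ => hx3 i)
      have : lam ∈ s a := by
        by_contra h
        exact hab ((ha4 h).trans e)
      refine ⟨a, ⟨ha1, haw, by grind⟩, ?_⟩
      rintro y ⟨h1, h2, h3⟩
      by_cases hy : lam ∈ y
      · have := B y h1 h2 hy (fun i => (h3 i).1)
        subst this
        subst e
        exact absurd ((h3 lam).2 rfl hxl hw) hlu
      · exact A y h1 h2 hy (fun i => (h3 i).1)
    · have e := A x hx1 hx2 hlx (fun i _ => hx3 i)
      have : lam ∈ s b := by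
        by_contra h
        exact hab (e.symm.trans (hb4 h).symm)
      refine ⟨b, ⟨hub, hb2, by grind⟩, ?_⟩
      rintro y ⟨h1, h2, h3⟩
      by_cases hy : lam ∈ y
      · exact B y h1 h2 hy (fun i => (h3 i).1)
      · have := A y h1 h2 hy (fun i => (h3 i).1)
        subst this
        subst e
        exact absurd ((h3 lam).2 rfl hxl hw) hlu
  · have : ∀ x, (∀ i, (i ≠ lam → i ∈ s x → i ∈ w → i ∈ u) ∧
        (i = lam → i ∉ s x → i ∈ w → i ∈ u)) ↔ ∀ i, i ∈ s x → i ∈ w → i ∈ u := by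
      intro x
      refine forall_congr' fun i => ?_
      by_cases h : i = lam
      · subst h; tauto
      · tauto
    simp only [this]
    exact hu u w huw
end

section
/- Let n be a natural number and let s be the outmap of a unique sink orientation (USO) of the n-dimensional hypercube. Then s : Finset (Fin n) → Finset (Fin n) is a bijection. -/
/-- The unique-sink property alone. -/
def USProp (n : ℕ) (s : Finset (Fin n) → Finset (Fin n)) : Prop :=
  ∀ u w : Finset (Fin n), u ⊆ w →
      ∃! x : Finset (Fin n), u ⊆ x ∧ x ⊆ w ∧ s x ∩ (w \ u) = ∅

theorem usprop_flip (n : ℕ) (s : Finset (Fin n) → Finset (Fin n)) (hs : USProp n s)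
    (l : Fin n) : USProp n (fun x => symmDiff (s x) {l}) := by
  intro u w huw
  by_cases hl : l ∈ w ∧ l ∉ u
  · obtain ⟨hlw, hlu⟩ := hl
    have h1 : u ⊆ w.erase l := fun i hi =>
      Finset.mem_erase.2 ⟨fun h => hlu (h ▸ hi), huw hi⟩
    have h2 : insert l u ⊆ w := Finset.insert_subset hlw huw
    obtain ⟨a, ⟨ha1, ha2, ha3⟩, ha⟩ := hs u (w.erase l) h1
    obtain ⟨b, ⟨hb1, hb2, hb3⟩, hb⟩ := hs (insert l u) w h2
    obtain ⟨c, ⟨hc1, hc2, hc3⟩, hc⟩ := hs u w huw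
    simp only [Finset.ext_iff, Finset.mem_inter, Finset.mem_sdiff, Finset.mem_erase,
      Finset.mem_insert, Finset.notMem_empty, iff_false, not_and, not_not] at ha3 hb3 hc3
    have hla : l ∉ a := fun h => (Finset.mem_erase.1 (ha2 h)).1 rfl
    have hlb : l ∈ b := hb1 (Finset.mem_insert_self _ _)
    have hua : ∀ x, u ⊆ x → x ⊆ w → (∀ i ∈ s x, i ≠ l → i ∈ w → i ∈ u) → l ∉ x → x = a := by
      intro x hx1 hx2 hx3 hx
      apply ha
      refine ⟨hx1, fun i hi => Finset.mem_erase.2 ⟨fun h => hx (h ▸ hi), hx2 hi⟩, ?_⟩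
      ext i
      simp only [Finset.mem_inter, Finset.mem_sdiff, Finset.mem_erase, Finset.notMem_empty,
        iff_false]
      grind
    have hub : ∀ x, u ⊆ x → x ⊆ w → (∀ i ∈ s x, i ≠ l → i ∈ w → i ∈ u) → l ∈ x → x = b := by
      intro x hx1 hx2 hx3 hx
      apply hb
      refine ⟨Finset.insert_subset hx hx1, hx2, ?_⟩
      ext i
      simp only [Finset.mem_inter, Finset.mem_sdiff, Finset.mem_insert, Finset.notMem_empty,
        iff_false]
      grind
    have huc : ∀ x, u ⊆ x → x ⊆ w → (∀ i ∈ s x, i ≠ l → i ∈ w → i ∈ u) → l ∉ s x → x = c := by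
      intro x hx1 hx2 hx3 hx
      apply hc
      refine ⟨hx1, hx2, ?_⟩
      ext i
      simp only [Finset.mem_inter, Finset.mem_sdiff, Finset.notMem_empty, iff_false]
      grind
    have key : ∀ x, symmDiff (s x) {l} ∩ (w \ u) = ∅ ↔
        (l ∈ s x ∧ ∀ i ∈ s x, i ≠ l → i ∈ w → i ∈ u) := by
      intro x
      simp only [Finset.ext_iff, Finset.mem_inter, Finset.mem_sdiff, Finset.mem_symmDiff,
        Finset.mem_singleton, Finset.notMem_empty, iff_false]
      grind
    simp only [key]
    have ha2' : a ⊆ w := ha2.trans (Finset.erase_subset _ _)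
    have hb1' : u ⊆ b := (Finset.subset_insert _ _).trans hb1
    have ha3' : ∀ i ∈ s a, i ≠ l → i ∈ w → i ∈ u := by grind
    have hb3' : ∀ i ∈ s b, i ≠ l → i ∈ w → i ∈ u := by grind
    have hc3' : ∀ i ∈ s c, i ≠ l → i ∈ w → i ∈ u := by grind
    have hlc : l ∉ s c := by grind
    by_cases hcl : l ∈ c
    · have hcb := hub c hc1 hc2 hc3' hcl
      refine ⟨a, ⟨ha1, ha2', ?_, ha3'⟩, ?_⟩
      · by_contra h
        have := huc a ha1 ha2' ha3' h
        exact hla (this ▸ hcl)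
      · rintro y ⟨hy1, hy2, hy3, hy4⟩
        apply hua y hy1 hy2 hy4
        intro h
        have := hub y hy1 hy2 hy4 h
        rw [this, ← hcb] at hy3
        exact hlc hy3
    · have hca := hua c hc1 hc2 hc3' hcl
      refine ⟨b, ⟨hb1', hb2, ?_, hb3'⟩, ?_⟩
      · by_contra h
        have := huc b hb1' hb2 hb3' h
        exact hcl (this ▸ hlb)
      · rintro y ⟨hy1, hy2, hy3, hy4⟩
        apply hub y hy1 hy2 hy4
        by_contra h
        have := hua y hy1 hy2 hy4 h
        rw [this, ← hca] at hy3
        exact hlc hy3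
  · have key : ∀ x, symmDiff (s x) {l} ∩ (w \ u) = s x ∩ (w \ u) := by
      intro x
      ext i
      simp only [Finset.mem_inter, Finset.mem_sdiff, Finset.mem_symmDiff,
        Finset.mem_singleton]
      grind
    simp only [key]
    exact hs u w huw

theorem usprop_flips (n : ℕ) (s : Finset (Fin n) → Finset (Fin n)) (hs : USProp n s)
    (R : Finset (Fin n)) : USProp n (fun x => symmDiff (s x) R) := by
  induction R using Finset.induction_on with
  | empty =>
    have : (fun x => symmDiff (s x) ∅) = s := by
      funext x
      exact symmDiff_bot _
    rw [this]
    exact hs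
  | insert l R hl ih =>
    have h := usprop_flip n _ ih l
    have e : (fun x => symmDiff (s x) (insert l R)) =
        (fun x => symmDiff (symmDiff (s x) R) {l}) := by
      funext x
      ext i
      simp only [Finset.mem_symmDiff, Finset.mem_insert, Finset.mem_singleton]
      grind
    rw [e]
    exact h

/-- The outmap of a USO of a cube is a bijection. -/
theorem uso_outmap_bijective (n : ℕ)
    (s : Finset (Fin n) → Finset (Fin n)) (hs : IsUSO n s) :
    Function.Bijective s := by
  rw [Function.bijective_iff_existsUnique]
  intro R
  have h := usprop_flips n s hs.2 R ∅ Finset.univ (Finset.empty_subset _)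
  have key : ∀ x, symmDiff (s x) R = ∅ ↔ s x = R := fun x => symmDiff_eq_bot
  simpa [key] using h
end

section
/- Let n be a natural number and let s be the outmap of a unique sink orientation (USO) of the n-dimensional hypercube. If u and v are vertices with s(u) = s(v), then u = v (injectivity of the outmap). -/
theorem uso_flip_one_s3 {n : ℕ} (s : Finset (Fin n) → Finset (Fin n)) (l : Fin n)
    (h : ∀ u w : Finset (Fin n), u ⊆ w →
      ∃! x : Finset (Fin n), u ⊆ x ∧ x ⊆ w ∧ ∀ a ∈ w, a ∉ u → a ∉ s x) :
    ∀ u w : Finset (Fin n), u ⊆ w →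
      ∃! x : Finset (Fin n), u ⊆ x ∧ x ⊆ w ∧ ∀ a ∈ w, a ∉ u → a ∉ symmDiff (s x) {l} := by
  intro u w huw
  by_cases hl : l ∈ w ∧ l ∉ u
  · obtain ⟨hlw, hlu⟩ := hl
    obtain ⟨x1, ⟨a1, b1, c1⟩, d1⟩ := h u (w.erase l) (by grind)
    obtain ⟨x2, ⟨a2, b2, c2⟩, d2⟩ := h (insert l u) w (by grind)
    obtain ⟨x, ⟨a, b, c⟩, d⟩ := h u w huw
    have key : ∀ y, u ⊆ y → y ⊆ w → (∀ a ∈ w, a ∉ u → a ≠ l → a ∉ s y) →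
        (l ∈ y ∧ y = x2) ∨ (l ∉ y ∧ y = x1) := by
      intro y p q r
      by_cases hy : l ∈ y
      · exact Or.inl ⟨hy, d2 y ⟨by grind, q, by grind⟩⟩
      · exact Or.inr ⟨hy, d1 y ⟨p, by grind, by grind⟩⟩
    have hx1 : l ∉ x1 := by grind
    have hx2 : l ∈ x2 := by grind
    have b1' : x1 ⊆ w := by grind
    have a2' : u ⊆ x2 := by grind
    have s1 : l ∉ s x1 → x1 = x := fun hh => d x1 ⟨a1, b1', by grind⟩
    have s2 : l ∉ s x2 → x2 = x := fun hh => d x2 ⟨a2', b2, by grind⟩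
    have hxl : l ∉ s x := c l hlw hlu
    have hkey : ∀ y, u ⊆ y → y ⊆ w → (∀ a ∈ w, a ∉ u → a ∉ symmDiff (s y) {l}) →
        l ∈ s y ∧ (y = x1 ∨ y = x2) := by
      intro y p q r
      have r1 : l ∈ s y := by
        have := r l hlw hlu
        simpa [Finset.mem_symmDiff] using this
      refine ⟨r1, ?_⟩
      have := key y p q (fun a ha hb hc => by
        have := r a ha hb
        simp [Finset.mem_symmDiff, hc] at this
        exact this)
      tauto
    rcases key x a b (fun a ha hb _ => c a ha hb) with ⟨-, e⟩ | ⟨-, e⟩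
    · have m : l ∈ s x1 := by
        by_contra hh
        have := s1 hh
        grind
      refine ⟨x1, ⟨a1, b1', ?_⟩, ?_⟩
      · intro a ha hb
        by_cases hal : a = l
        · subst hal; simp [Finset.mem_symmDiff, m]
        · have := c1 a (by grind) hb
          simp [Finset.mem_symmDiff, hal, this]
      · rintro y ⟨p, q, r⟩
        have := hkey y p q r
        grind
    · have m : l ∈ s x2 := by
        by_contra hh
        have := s2 hh
        grind
      refine ⟨x2, ⟨a2', b2, ?_⟩, ?_⟩
      · intro a ha hb
        by_cases hal : a = l
        · subst hal; simp [Finset.mem_symmDiff, m]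
        · have := c2 a ha (by grind)
          simp [Finset.mem_symmDiff, hal, this]
      · rintro y ⟨p, q, r⟩
        have := hkey y p q r
        grind
  · have e : ∀ x, (∀ a ∈ w, a ∉ u → a ∉ symmDiff (s x) {l}) ↔ (∀ a ∈ w, a ∉ u → a ∉ s x) := by
      intro x
      refine forall_congr' fun a => forall_congr' fun ha => forall_congr' fun hb => ?_
      have : a ≠ l := by rintro rfl; exact hl ⟨ha, hb⟩
      simp [Finset.mem_symmDiff, this]
    simp only [e]
    exact h u w huw

theorem uso_flip {n : ℕ} (s : Finset (Fin n) → Finset (Fin n))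
    (h : ∀ u w : Finset (Fin n), u ⊆ w →
      ∃! x : Finset (Fin n), u ⊆ x ∧ x ⊆ w ∧ ∀ a ∈ w, a ∉ u → a ∉ s x) (T : Finset (Fin n)) :
    ∀ u w : Finset (Fin n), u ⊆ w →
      ∃! x : Finset (Fin n), u ⊆ x ∧ x ⊆ w ∧ ∀ a ∈ w, a ∉ u → a ∉ symmDiff (s x) T := by
  induction T using Finset.induction_on with
  | empty => simpa [← Finset.bot_eq_empty] using h
  | insert l T hl ih =>
    have e : insert l T = symmDiff T {l} := by
      ext a
      simp only [Finset.mem_symmDiff, Finset.mem_insert, Finset.mem_singleton]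
      grind
    have := uso_flip_one_s3 (fun x => symmDiff (s x) T) l ih
    simpa only [e, symmDiff_assoc] using this

/-- The outmap of a USO of a cube is injective. -/
theorem uso_outmap_injective (n : ℕ)
    (s : Finset (Fin n) → Finset (Fin n)) (hs : IsUSO n s)
    (u v : Finset (Fin n)) (huv : s u = s v) :
    u = v := by
  have h : ∀ u w : Finset (Fin n), u ⊆ w →
      ∃! x : Finset (Fin n), u ⊆ x ∧ x ⊆ w ∧ ∀ a ∈ w, a ∉ u → a ∉ s x := by
    intro u w huw
    have e : ∀ x, s x ∩ (w \ u) = ∅ ↔ ∀ a ∈ w, a ∉ u → a ∉ s x := by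
      intro x
      rw [Finset.eq_empty_iff_forall_notMem]
      refine forall_congr' fun a => ?_
      simp only [Finset.mem_inter, Finset.mem_sdiff]
      tauto
    simpa only [e] using hs.2 u w huw
  refine (uso_flip s h (s u) ∅ Finset.univ (Finset.empty_subset _)).unique ?_ ?_
  · simp
  · simp [huv]
end

section
/- Let n be a natural number and let s be the outmap of a unique sink orientation (USO) of the n-dimensional hypercube. Then there exists exactly one vertex w ⊆ Fin n with s(w) = Finset.univ (the unique global source of the cube). -/
lemma uso_count (n : ℕ) (s : Finset (Fin n) → Finset (Fin n)) (hs : IsUSO n s)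
    (T : Finset (Fin n)) :
    (Finset.univ.filter (fun v => ∀ i ∈ T, i ∉ s v)).card = 2 ^ (n - T.card) := by
  have h1 : 2 ^ (n - T.card) = (Tᶜ).powerset.card := by
    rw [Finset.card_powerset, Finset.card_compl, Fintype.card_fin]
  rw [h1]
  have key : ∀ u x : Finset (Fin n), u ⊆ Tᶜ → (u ⊆ x ∧ x ⊆ u ∪ T ↔ x \ T = u) := by
    intro u x hu
    constructor
    · rintro ⟨h1, h2⟩
      ext i
      have a := @hu i
      have b := @h1 i
      have c := @h2 i
      simp only [Finset.mem_compl, Finset.mem_union, Finset.mem_sdiff] at *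
      tauto
    · rintro rfl
      refine ⟨Finset.sdiff_subset, fun i hi => ?_⟩
      simp only [Finset.mem_union, Finset.mem_sdiff]
      tauto
  have hT : ∀ u : Finset (Fin n), u ⊆ Tᶜ → (u ∪ T) \ u = T := by
    intro u hu
    ext i
    have a := @hu i
    simp only [Finset.mem_compl, Finset.mem_union, Finset.mem_sdiff] at *
    tauto
  have hE : ∀ x : Finset (Fin n), s x ∩ T = ∅ ↔ ∀ i ∈ T, i ∉ s x := by
    intro x
    rw [← Finset.disjoint_iff_inter_eq_empty, Finset.disjoint_right]
  have hU : ∀ u : Finset (Fin n), u ⊆ Tᶜ → ∃! x, x \ T = u ∧ ∀ i ∈ T, i ∉ s x := by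
    intro u hu
    have h := hs.2 u (u ∪ T) Finset.subset_union_left
    simpa only [hT u hu, hE, ← and_assoc, key u _ hu] using h
  have hsub : ∀ v : Finset (Fin n), v \ T ⊆ Tᶜ := by
    intro v i hi
    simp only [Finset.mem_compl, Finset.mem_sdiff] at *
    exact hi.2
  apply Finset.card_bij (fun v _ => v \ T)
  · intro v _
    exact Finset.mem_powerset.2 (hsub v)
  · intro v hv w hw h
    simp only [Finset.mem_filter, Finset.mem_univ, true_and] at hv hw
    exact (hU (v \ T) (hsub v)).unique ⟨rfl, hv⟩ ⟨h.symm, hw⟩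
  · intro u hu
    obtain ⟨x, hx, -⟩ := hU u (Finset.mem_powerset.1 hu)
    exact ⟨x, by simpa using hx.2, hx.1⟩

theorem uso_unique_global_source (n : ℕ)
    (s : Finset (Fin n) → Finset (Fin n)) (hs : IsUSO n s) :
    ∃! w : Finset (Fin n), s w = Finset.univ := by
  have hc : ((Finset.univ.filter (fun w => s w = Finset.univ)).card : ℤ) = 1 := by
    have e : ∀ w, (if s w = Finset.univ then (1 : ℤ) else 0) =
        ∑ T ∈ (Finset.univ : Finset (Fin n)).powerset,
          (-1) ^ T.card * (if ∀ i ∈ T, i ∉ s w then (1 : ℤ) else 0) := by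
      intro w
      have h := Finset.prod_add (fun i => -(if i ∉ s w then (1 : ℤ) else 0)) (fun _ => 1)
        (Finset.univ : Finset (Fin n))
      have h2 : ∏ i : Fin n, (-(if i ∉ s w then (1 : ℤ) else 0) + 1) =
          if s w = Finset.univ then (1 : ℤ) else 0 := by
        split_ifs with hw
        · rw [Finset.eq_univ_iff_forall] at hw
          exact Finset.prod_eq_one fun i _ => by simp [hw i]
        · rw [Finset.eq_univ_iff_forall] at hw
          push Not at hw
          obtain ⟨i, hi⟩ := hw
          exact Finset.prod_eq_zero (Finset.mem_univ i) (by simp [hi])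
      rw [← h2, h]
      refine Finset.sum_congr rfl fun T _ => ?_
      rw [Finset.prod_const_one, mul_one, Finset.prod_neg]
      congr 1
      rw [Finset.prod_boole]
      congr
    rw [Finset.card_filter]
    push_cast
    simp_rw [e]
    rw [Finset.sum_comm]
    have e2 : ∀ T : Finset (Fin n), ∑ w, (-1 : ℤ) ^ T.card *
        (if ∀ i ∈ T, i ∉ s w then (1 : ℤ) else 0) =
        (-1) ^ T.card * 2 ^ ((Finset.univ : Finset (Fin n)).card - T.card) := by
      intro T
      rw [← Finset.mul_sum, Finset.sum_boole, uso_count n s hs T]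
      simp
    simp_rw [e2]
    rw [Finset.sum_pow_mul_eq_add_pow]
    norm_num
  obtain ⟨w, hw⟩ := Finset.card_eq_one.1 (by exact_mod_cast hc)
  have hm : ∀ x, s x = Finset.univ ↔ x = w := by
    intro x
    have := Finset.ext_iff.1 hw x
    simpa using this
  exact ⟨w, (hm w).2 rfl, fun y hy => (hm y).1 hy⟩
end

section
/- Let n be a natural number and let s be the outmap of a unique sink orientation (USO) of the n-dimensional hypercube. Then there exists a natural number l with 1 ≤ l ≤ 2^n such that the l-fold iterate of s applied to the empty set equals the empty set: s^[l](∅) = ∅. -/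
theorem uso_key (n : ℕ) (s : Finset (Fin n) → Finset (Fin n)) (hs : IsUSO n s)
    (L : Finset (Fin n)) : ∀ u w : Finset (Fin n), u ⊆ w →
      ∃ x : Finset (Fin n), (u ⊆ x ∧ x ⊆ w ∧ ∀ i ∈ w, i ∉ u → (i ∈ s x ↔ i ∈ L)) ∧
        ∀ y : Finset (Fin n), u ⊆ y → y ⊆ w → (∀ i ∈ w, i ∉ u → (i ∈ s y ↔ i ∈ L)) →
          y = x := by
  induction L using Finset.induction_on with
  | empty =>
    intro u w huw
    obtain ⟨x, ⟨h1, h2, h3⟩, h4⟩ := hs.2 u w huw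
    refine ⟨x, ⟨h1, h2, ?_⟩, ?_⟩
    · intro i hi hiu
      have : i ∉ s x ∩ (w \ u) := by rw [h3]; simp
      simp only [Finset.mem_inter, Finset.mem_sdiff] at this
      simp only [Finset.notMem_empty, iff_false]
      tauto
    · intro y hy1 hy2 hy3
      apply h4 y ⟨hy1, hy2, ?_⟩
      ext i
      have := hy3 i
      simp only [Finset.mem_inter, Finset.mem_sdiff, Finset.notMem_empty, iff_false] at *
      tauto
  | insert a L ha ih =>
    intro u w huw
    by_cases haw : a ∈ w ∧ a ∉ u
    · obtain ⟨haw, hau⟩ := haw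
      obtain ⟨x, ⟨hx1, hx2, hx3⟩, hx4⟩ := ih u w huw
      have hax : a ∉ s x := fun h => ha ((hx3 a haw hau).1 h)
      obtain ⟨x0, ⟨p1, p2, p3⟩, p4⟩ := ih u (w.erase a) (by grind)
      obtain ⟨x1, ⟨q1, q2, q3⟩, q4⟩ := ih (insert a u) w (by grind)
      have e0 : ∀ y : Finset (Fin n), u ⊆ y → y ⊆ w → a ∉ y →
          (∀ i ∈ w, i ∉ u → i ≠ a → (i ∈ s y ↔ i ∈ L)) → y = x0 := by
        intro y h1 h2 h3 h4
        apply p4 y h1 (by grind)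
        grind
      have e1 : ∀ y : Finset (Fin n), u ⊆ y → y ⊆ w → a ∈ y →
          (∀ i ∈ w, i ∉ u → i ≠ a → (i ∈ s y ↔ i ∈ L)) → y = x1 := by
        intro y h1 h2 h3 h4
        apply q4 y (by grind) h2
        grind
      have a0 : a ∉ x0 := by grind
      have a1 : a ∈ x1 := by grind
      have fin : ∀ z : Finset (Fin n), u ⊆ z → z ⊆ w → z ≠ x →
          (∀ i ∈ w, i ∉ u → i ≠ a → (i ∈ s z ↔ i ∈ L)) → a ∈ s z := by
        intro z h1 h2 h3 h4
        by_contra h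
        apply h3
        apply hx4 z h1 h2
        intro i hi hiu
        by_cases hia : i = a
        · subst hia; tauto
        · exact h4 i hi hiu hia
      by_cases hx : a ∈ x
      · have hxx : x = x1 := e1 x hx1 hx2 hx (fun i h h' _ => hx3 i h h')
        have r1 : x0 ⊆ w := by grind
        have r3 : ∀ i ∈ w, i ∉ u → i ≠ a → (i ∈ s x0 ↔ i ∈ L) := by grind
        have r := fin x0 p1 r1 (by rintro rfl; exact a0 hx) r3
        refine ⟨x0, ⟨p1, r1, by grind⟩, ?_⟩
        intro y hy1 hy2 hy3
        have hy4 : ∀ i ∈ w, i ∉ u → i ≠ a → (i ∈ s y ↔ i ∈ L) := by grind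
        by_cases hay : a ∈ y
        · have := e1 y hy1 hy2 hay hy4
          grind
        · exact e0 y hy1 hy2 hay hy4
      · have hxx : x = x0 := e0 x hx1 hx2 hx (fun i h h' _ => hx3 i h h')
        have r0 : u ⊆ x1 := by grind
        have r3 : ∀ i ∈ w, i ∉ u → i ≠ a → (i ∈ s x1 ↔ i ∈ L) := by grind
        have r := fin x1 r0 q2 (by rintro rfl; exact hx a1) r3
        refine ⟨x1, ⟨r0, q2, by grind⟩, ?_⟩
        intro y hy1 hy2 hy3
        have hy4 : ∀ i ∈ w, i ∉ u → i ≠ a → (i ∈ s y ↔ i ∈ L) := by grind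
        by_cases hay : a ∈ y
        · exact e1 y hy1 hy2 hay hy4
        · have := e0 y hy1 hy2 hay hy4
          grind
    · obtain ⟨x, ⟨hx1, hx2, hx3⟩, hx4⟩ := ih u w huw
      refine ⟨x, ⟨hx1, hx2, by grind⟩, ?_⟩
      intro y hy1 hy2 hy3
      exact hx4 y hy1 hy2 (by grind)

/-- The sequence of iterates of a USO outmap starting at the empty set returns
to the empty set after at most 2^n steps. -/
theorem uso_iterate_empty_returns (n : ℕ)
    (s : Finset (Fin n) → Finset (Fin n)) (hs : IsUSO n s) :
    ∃ l : ℕ, 1 ≤ l ∧ l ≤ 2 ^ n ∧ s^[l] ∅ = ∅ := by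
  have hinj : Function.Injective s := by
    apply Finite.injective_iff_surjective.2
    intro L
    obtain ⟨x, ⟨_, _, h⟩, _⟩ := uso_key n s hs L ∅ Finset.univ (by simp)
    exact ⟨x, by ext i; exact h i (by simp) (by simp)⟩
  obtain ⟨i, j, hij, h⟩ := Fintype.exists_ne_map_eq_of_card_lt
    (fun i : Fin (2 ^ n + 1) => s^[(i : ℕ)] ∅) (by simp)
  have main : ∀ i j : ℕ, i < j → j < 2 ^ n + 1 → s^[i] ∅ = s^[j] ∅ →
      ∃ l : ℕ, 1 ≤ l ∧ l ≤ 2 ^ n ∧ s^[l] ∅ = ∅ := by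
    intro i j hlt hj h
    refine ⟨j - i, by omega, by omega, ?_⟩
    apply hinj.iterate i
    rw [← Function.iterate_add_apply, h]
    congr 2
    omega
  rcases lt_or_gt_of_ne (fun e => hij (Fin.ext e) : (i : ℕ) ≠ j) with hl | hl
  · exact main i j hl j.2 h
  · exact main j i hl i.2 h.symm
end

section
/- Let n be a natural number and let s₁ and s₂ be outmaps of unique sink orientations (USOs) of the n-dimensional hypercube. Identify subsets of Fin n with subsets of Fin (n+1) not containing the last element Fin.last n, via the embedding Fin.castSucc. Define the combined outmap s on Finset (Fin (n+1)) by: if Fin.last n ∉ v then s(v) is the image under Fin.castSucc of s₁(v'), where v' is the preimage of v; if Fin.last n ∈ v then s(v) is the image under Fin.castSucc of s₂(v') together with the element Fin.last n, where v' is the preimage of v \ {Fin.last n}. Then s is the outmap of a unique sink orientation of the (n+1)-dimensional hypercube (this is the combination φ₁ ↑ φ₂ in which the lower (n+1)-facet carries s₁, the upper (n+1)-facet carries s₂, and all edges in direction n+1 are directed from the upper facet to the lower facet). -/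
/-- The combined outmap φ₁ ↑ φ₂: the lower (n+1)-facet carries s₁, the upper
(n+1)-facet carries s₂, and all edges in direction n+1 point from the upper
facet to the lower facet (they are outgoing at vertices containing Fin.last n). -/
noncomputable def combineUp (n : ℕ) (s₁ s₂ : Finset (Fin n) → Finset (Fin n)) :
    Finset (Fin (n + 1)) → Finset (Fin (n + 1)) := fun v =>
  if Fin.last n ∈ v then
    (s₂ ((v \ {Fin.last n}).preimage Fin.castSucc
        (Fin.castSucc_injective n).injOn)).image Fin.castSucc ∪ {Fin.last n}
  else
    (s₁ (v.preimage Fin.castSucc (Fin.castSucc_injective n).injOn)).image Fin.castSucc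

noncomputable def lowPart (n : ℕ) (v : Finset (Fin (n + 1))) : Finset (Fin n) :=
  v.preimage Fin.castSucc (Fin.castSucc_injective n).injOn

theorem mem_lowPart (n : ℕ) (v : Finset (Fin (n + 1))) (i : Fin n) :
    i ∈ lowPart n v ↔ i.castSucc ∈ v := by
  simp [lowPart]

theorem lowPart_ext (n : ℕ) (v w : Finset (Fin (n + 1))) (h : lowPart n v = lowPart n w)
    (hl : Fin.last n ∈ v ↔ Fin.last n ∈ w) : v = w := by
  ext i
  induction i using Fin.lastCases with
  | last => exact hl
  | cast i => rw [← mem_lowPart, ← mem_lowPart, h]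

theorem lowPart_image (n : ℕ) (x : Finset (Fin n)) :
    lowPart n (x.image Fin.castSucc) = x := by
  ext i; simp [mem_lowPart]

theorem lowPart_insert (n : ℕ) (x : Finset (Fin (n + 1))) :
    lowPart n (insert (Fin.last n) x) = lowPart n x := by
  ext i; simp [mem_lowPart, Fin.castSucc_ne_last]

theorem lowPart_sdiff (n : ℕ) (x : Finset (Fin (n + 1))) :
    lowPart n (x \ {Fin.last n}) = lowPart n x := by
  ext i; simp [mem_lowPart, Fin.castSucc_ne_last]

theorem last_mem_combineUp (n : ℕ) (s₁ s₂ : Finset (Fin n) → Finset (Fin n))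
    (v : Finset (Fin (n + 1))) : Fin.last n ∈ combineUp n s₁ s₂ v ↔ Fin.last n ∈ v := by
  unfold combineUp
  split_ifs with h <;> simp [h, Fin.castSucc_ne_last]

theorem lowPart_combineUp (n : ℕ) (s₁ s₂ : Finset (Fin n) → Finset (Fin n))
    (v : Finset (Fin (n + 1))) : lowPart n (combineUp n s₁ s₂ v) =
      if Fin.last n ∈ v then s₂ (lowPart n v) else s₁ (lowPart n v) := by
  by_cases h : Fin.last n ∈ v
  · rw [if_pos h, ← lowPart_sdiff n v]
    ext i
    rw [mem_lowPart]
    simp [combineUp, h, lowPart, Fin.castSucc_ne_last]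
  · rw [if_neg h]
    ext i
    rw [mem_lowPart]
    simp [combineUp, h, lowPart]

theorem subset_iff_lowPart (n : ℕ) (v w : Finset (Fin (n + 1))) :
    v ⊆ w ↔ lowPart n v ⊆ lowPart n w ∧ (Fin.last n ∈ v → Fin.last n ∈ w) := by
  simp only [Finset.subset_iff, mem_lowPart, Fin.forall_fin_succ']

theorem sink_iff_lowPart (n : ℕ) (v u w : Finset (Fin (n + 1))) :
    v ∩ (w \ u) = ∅ ↔ lowPart n v ∩ (lowPart n w \ lowPart n u) = ∅ ∧
      ¬ (Fin.last n ∈ v ∧ Fin.last n ∈ w ∧ Fin.last n ∉ u) := by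
  simp only [Finset.eq_empty_iff_forall_notMem, Finset.mem_inter, Finset.mem_sdiff,
    mem_lowPart, Fin.forall_fin_succ']

/-- Combining two USOs of the n-cube as the two (n+1)-facets of an (n+1)-cube,
with all edges in the new direction oriented from the upper facet to the lower
facet, yields a USO of the (n+1)-cube. -/
theorem combineUp_isUSO (n : ℕ)
    (s₁ s₂ : Finset (Fin n) → Finset (Fin n))
    (h₁ : IsUSO n s₁) (h₂ : IsUSO n s₂) :
    IsUSO (n + 1) (combineUp n s₁ s₂) := by
  constructor
  · intro v lam
    induction lam using Fin.lastCases with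
    | last => simp [last_mem_combineUp, Finset.mem_symmDiff]
    | cast i =>
      have e : lowPart n (symmDiff v {i.castSucc}) = symmDiff (lowPart n v) {i} := by
        ext j; simp [mem_lowPart, Finset.mem_symmDiff]
      have l : Fin.last n ∈ symmDiff v {i.castSucc} ↔ Fin.last n ∈ v := by
        simp [Finset.mem_symmDiff, (Fin.castSucc_ne_last i).symm]
      rw [← mem_lowPart, ← mem_lowPart, lowPart_combineUp, lowPart_combineUp, e]
      simp only [l]
      split_ifs
      · exact h₂.1 _ _
      · exact h₁.1 _ _
  · intro u w huw
    rw [subset_iff_lowPart] at huw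
    simp only [sink_iff_lowPart, subset_iff_lowPart, last_mem_combineUp, lowPart_combineUp]
    by_cases hu : Fin.last n ∈ u
    · obtain ⟨x, ⟨a, b, c⟩, d⟩ := h₂.2 _ _ huw.1
      refine ⟨insert (Fin.last n) (x.image Fin.castSucc), ?_, ?_⟩
      · simp [lowPart_insert, lowPart_image, a, b, c, hu, huw.2 hu]
      · rintro y ⟨⟨p, q⟩, ⟨r, t⟩, f, g⟩
        rw [if_pos (q hu)] at f
        apply lowPart_ext
        · rw [lowPart_insert, lowPart_image]
          exact d _ ⟨p, r, f⟩
        · simp [q hu]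
    · obtain ⟨x, ⟨a, b, c⟩, d⟩ := h₁.2 _ _ huw.1
      refine ⟨x.image Fin.castSucc, ?_, ?_⟩
      · simp [lowPart_image, a, b, c, hu, Fin.castSucc_ne_last]
      · rintro y ⟨⟨p, q⟩, ⟨r, t⟩, f, g⟩
        have hy : Fin.last n ∉ y := fun h => g ⟨h, t h, hu⟩
        rw [if_neg hy] at f
        apply lowPart_ext
        · rw [lowPart_image]
          exact d _ ⟨p, r, f⟩
        · simp [hy, Fin.castSucc_ne_last]
end

section
/- Let n be a natural number and let s₁ and s₂ be outmaps of unique sink orientations (USOs) of the n-dimensional hypercube. Identify subsets of Fin n with subsets of Fin (n+1) not containing the last element Fin.last n, via the embedding Fin.castSucc. Define the combined outmap s on Finset (Fin (n+1)) by: if Fin.last n ∉ v then s(v) is the image under Fin.castSucc of s₁(v') together with the element Fin.last n, where v' is the preimage of v; if Fin.last n ∈ v then s(v) is the image under Fin.castSucc of s₂(v'), where v' is the preimage of v \ {Fin.last n}. Then s is the outmap of a unique sink orientation of the (n+1)-dimensional hypercube (this is the combination φ₁ ↓ φ₂ in which the lower (n+1)-facet carries s₁, the upper (n+1)-facet carries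 s₂, and all edges in direction n+1 are directed from the lower facet to the upper facet). -/
/-- The combined outmap φ₁ ↓ φ₂: the lower (n+1)-facet carries s₁, the upper
(n+1)-facet carries s₂, and all edges in direction n+1 point from the lower
facet to the upper facet (they are outgoing at vertices not containing Fin.last n). -/
noncomputable def combineDown (n : ℕ) (s₁ s₂ : Finset (Fin n) → Finset (Fin n)) :
    Finset (Fin (n + 1)) → Finset (Fin (n + 1)) := fun v =>
  if Fin.last n ∈ v then
    (s₂ ((v \ {Fin.last n}).preimage Fin.castSucc
        (Fin.castSucc_injective n).injOn)).image Fin.castSucc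
  else
    (s₁ (v.preimage Fin.castSucc (Fin.castSucc_injective n).injOn)).image Fin.castSucc ∪
      {Fin.last n}

/-- Restriction of a vertex of the (n+1)-cube to the first n coordinates. -/
noncomputable def dn (n : ℕ) (v : Finset (Fin (n + 1))) : Finset (Fin n) :=
  v.preimage Fin.castSucc (Fin.castSucc_injective n).injOn

theorem mem_dn {n : ℕ} {v : Finset (Fin (n + 1))} {i : Fin n} :
    i ∈ dn n v ↔ i.castSucc ∈ v := by
  simp [dn]

theorem dn_sdiff {n : ℕ} (v : Finset (Fin (n + 1))) :
    dn n (v \ {Fin.last n}) = dn n v := by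
  ext i
  simp [mem_dn, Fin.castSucc_ne_last]

theorem last_mem_cd {n : ℕ} (s₁ s₂ : Finset (Fin n) → Finset (Fin n))
    (v : Finset (Fin (n + 1))) :
    Fin.last n ∈ combineDown n s₁ s₂ v ↔ Fin.last n ∉ v := by
  unfold combineDown
  split_ifs with h <;> simp [h, Fin.castSucc_ne_last]

theorem cast_mem_cd {n : ℕ} (s₁ s₂ : Finset (Fin n) → Finset (Fin n))
    (v : Finset (Fin (n + 1))) (i : Fin n) :
    i.castSucc ∈ combineDown n s₁ s₂ v ↔
      i ∈ (if Fin.last n ∈ v then s₂ else s₁) (dn n v) := by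
  unfold combineDown
  change _ ∈ (if Fin.last n ∈ v then (s₂ (dn n (v \ {Fin.last n}))).image Fin.castSucc
    else (s₁ (dn n v)).image Fin.castSucc ∪ {Fin.last n}) ↔ _
  rw [dn_sdiff]
  split_ifs with h <;> simp [Fin.castSucc_ne_last]

theorem sink_iff {n : ℕ} (s : Finset (Fin n) → Finset (Fin n)) (x u w : Finset (Fin n)) :
    (u ⊆ x ∧ x ⊆ w ∧ s x ∩ (w \ u) = ∅) ↔
      ∀ i, (i ∈ u → i ∈ x) ∧ (i ∈ x → i ∈ w) ∧ (i ∈ s x → i ∈ w → i ∈ u) := by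
  simp only [Finset.subset_iff, Finset.eq_empty_iff_forall_notMem, Finset.mem_inter,
    Finset.mem_sdiff, forall_and]
  grind

theorem sink_cd {n : ℕ} (s₁ s₂ : Finset (Fin n) → Finset (Fin n))
    (u w x : Finset (Fin (n + 1))) (h : u ⊆ w) :
    (u ⊆ x ∧ x ⊆ w ∧ combineDown n s₁ s₂ x ∩ (w \ u) = ∅) ↔
      (Fin.last n ∈ x ↔ Fin.last n ∈ w) ∧
      (dn n u ⊆ dn n x ∧ dn n x ⊆ dn n w ∧
        (if Fin.last n ∈ w then s₂ else s₁) (dn n x) ∩ (dn n w \ dn n u) = ∅) := by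
  rw [sink_iff, sink_iff, Fin.forall_fin_succ']
  simp only [last_mem_cd, cast_mem_cd, mem_dn]
  have hl := @h (Fin.last n)
  by_cases hx : Fin.last n ∈ x <;> by_cases hw : Fin.last n ∈ w <;>
    simp only [hx, hw, if_true, if_false] <;> tauto

theorem combineDown_isUSO (n : ℕ)
    (s₁ s₂ : Finset (Fin n) → Finset (Fin n))
    (h₁ : IsUSO n s₁) (h₂ : IsUSO n s₂) :
    IsUSO (n + 1) (combineDown n s₁ s₂) := by
  refine ⟨?_, ?_⟩
  · intro v lam
    induction lam using Fin.lastCases with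
    | last => simp [last_mem_cd, Finset.mem_symmDiff]
    | cast i =>
      have hd : dn n (symmDiff v {i.castSucc}) = symmDiff (dn n v) {i} := by
        ext j
        simp [mem_dn, Finset.mem_symmDiff]
      have hl : Fin.last n ∈ symmDiff v {i.castSucc} ↔ Fin.last n ∈ v := by
        simp [Finset.mem_symmDiff, (Fin.castSucc_ne_last i).symm]
      rw [cast_mem_cd, cast_mem_cd, hd]
      simp only [hl]
      split_ifs
      · exact h₂.1 _ _
      · exact h₁.1 _ _
  · intro u w huw
    have hs : IsUSO n (if Fin.last n ∈ w then s₂ else s₁) := by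
      split_ifs
      · exact h₂
      · exact h₁
    have hd : dn n u ⊆ dn n w := fun i hi => mem_dn.2 (huw (mem_dn.1 hi))
    obtain ⟨y, hy, hu⟩ := hs.2 _ _ hd
    simp only [sink_cd s₁ s₂ u w _ huw]
    have hdy : dn n (y.image Fin.castSucc ∪ (if Fin.last n ∈ w then {Fin.last n} else ∅)) = y := by
      ext j
      split_ifs <;> simp [mem_dn, Fin.castSucc_ne_last]
    refine ⟨y.image Fin.castSucc ∪ (if Fin.last n ∈ w then {Fin.last n} else ∅),
      ⟨?_, ?_⟩, ?_⟩
    · by_cases hw : Fin.last n ∈ w <;> simp [hw, Fin.castSucc_ne_last]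
    · rw [hdy]
      exact hy
    · rintro z ⟨hz1, hz2⟩
      have hz := hu _ hz2
      ext j
      induction j using Fin.lastCases with
      | last =>
        rw [hz1]
        by_cases hw : Fin.last n ∈ w <;> simp [hw, Fin.castSucc_ne_last]
      | cast i => rw [← mem_dn, ← mem_dn, hdy, hz]
end

section
/- For every n ≥ 1 and every k ≥ 1, the iterates of the recursively defined outmaps s_n starting at the empty set satisfy: s_{n+1}^[2k-1](∅) = (image under Fin.castSucc of s_n^[k](∅)) ∪ {Fin.last n} and s_{n+1}^[2k](∅) = image under Fin.castSucc of s_n^[k](∅). -/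
/-- The recursion step from dimension n to dimension n+1: on the lower facet
(vertices not containing Fin.last n) use the outmap s together with the
outgoing new direction Fin.last n; on the upper facet (vertices containing
Fin.last n) all edges point downward, so the outmap is v \ {Fin.last n}. -/
noncomputable def stepOutmap (n : ℕ) (s : Finset (Fin n) → Finset (Fin n)) :
    Finset (Fin (n + 1)) → Finset (Fin (n + 1)) := fun v =>
  if Fin.last n ∈ v then v \ {Fin.last n}
  else
    (s (v.preimage Fin.castSucc (Fin.castSucc_injective n).injOn)).image Fin.castSucc ∪
      {Fin.last n}

/-- The recursively defined family of outmaps s_n: for n = 1 the single edge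
points from ∅ to {0}; s_{n+1} is obtained from s_n by the recursion step.
(The value at n = 0 is irrelevant.) -/
noncomputable def recOutmap : (n : ℕ) → Finset (Fin n) → Finset (Fin n)
  | 0 => fun _ => ∅
  | 1 => fun v => if (0 : Fin 1) ∈ v then ∅ else {0}
  | (n + 2) => stepOutmap (n + 1) (recOutmap (n + 1))

theorem stepOutmap_lower (n : ℕ) (s : Finset (Fin n) → Finset (Fin n)) (w : Finset (Fin n)) :
    stepOutmap n s (w.image Fin.castSucc) = (s w).image Fin.castSucc ∪ {Fin.last n} := by
  have h1 : Fin.last n ∉ w.image Fin.castSucc := by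
    simp [Fin.castSucc_ne_last]
  have h2 : (w.image Fin.castSucc).preimage Fin.castSucc
      (Fin.castSucc_injective n).injOn = w := by
    ext x
    simp
  unfold stepOutmap
  rw [if_neg h1, h2]

theorem stepOutmap_upper (n : ℕ) (s : Finset (Fin n) → Finset (Fin n)) (w : Finset (Fin n)) :
    stepOutmap n s (w.image Fin.castSucc ∪ {Fin.last n}) = w.image Fin.castSucc := by
  have h1 : Fin.last n ∉ w.image Fin.castSucc := by
    simp [Fin.castSucc_ne_last]
  unfold stepOutmap
  rw [if_pos (by simp)]
  ext x
  by_cases hx : x = Fin.last n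
  · subst hx
    simp [Fin.castSucc_ne_last]
  · simp [hx]

theorem stepOutmap_even (n : ℕ) (s : Finset (Fin n) → Finset (Fin n)) (k : ℕ) :
    (stepOutmap n s)^[2 * k] ∅ = (s^[k] ∅).image Fin.castSucc := by
  induction k with
  | zero => simp
  | succ k ih =>
    rw [show 2 * (k + 1) = 2 * k + 1 + 1 by ring, Function.iterate_succ_apply',
      Function.iterate_succ_apply', ih, stepOutmap_lower, stepOutmap_upper,
      Function.iterate_succ_apply']

/-- The iterates of s_{n+1} starting at ∅ track the iterates of s_n at half
speed: the (2k-1)-st iterate is the k-th iterate of s_n (lifted to the upper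
facet) and the (2k)-th iterate is the k-th iterate of s_n (in the lower facet). -/
theorem recOutmap_iterate_doubling (n k : ℕ) (hn : 1 ≤ n) (hk : 1 ≤ k) :
    (recOutmap (n + 1))^[2 * k - 1] ∅ =
        ((recOutmap n)^[k] ∅).image Fin.castSucc ∪ {Fin.last n} ∧
    (recOutmap (n + 1))^[2 * k] ∅ = ((recOutmap n)^[k] ∅).image Fin.castSucc := by
  obtain ⟨m, rfl⟩ : ∃ m, n = m + 1 := ⟨n - 1, by omega⟩
  obtain ⟨j, rfl⟩ : ∃ j, k = j + 1 := ⟨k - 1, by omega⟩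
  change (stepOutmap (m + 1) (recOutmap (m + 1)))^[2 * (j + 1) - 1] ∅ = _ ∧
    (stepOutmap (m + 1) (recOutmap (m + 1)))^[2 * (j + 1)] ∅ = _
  refine ⟨?_, stepOutmap_even _ _ _⟩
  rw [show 2 * (j + 1) - 1 = 2 * j + 1 by omega, Function.iterate_succ_apply',
    stepOutmap_even, stepOutmap_lower, Function.iterate_succ_apply']
end

section
/- Let n be a natural number and let s be the outmap of a unique sink orientation (USO) of the n-dimensional hypercube. Then the sequence k ↦ s^[k](∅) is periodic: there exists l with 1 ≤ l ≤ 2^n such that s^[k+l](∅) = s^[k](∅) for every natural number k. -/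
theorem flip_one (n : ℕ) (s : Finset (Fin n) → Finset (Fin n)) (hs : IsUSO n s) (a : Fin n) :
    IsUSO n (fun v => symmDiff (s v) {a}) := by
  obtain ⟨ho, hu⟩ := hs
  refine ⟨?_, ?_⟩
  · intro v b
    have := ho v b
    simp only [Finset.mem_symmDiff, Finset.mem_singleton]
    tauto
  · intro u w huw
    have key : ∀ x : Finset (Fin n), ∀ d : Finset (Fin n),
        s x ∩ d = ∅ ↔ ∀ b ∈ d, b ∉ s x := by
      intro x d
      simp only [Finset.ext_iff, Finset.mem_inter, Finset.notMem_empty]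
      exact ⟨fun h b hb hx => (h b).1 ⟨hx, hb⟩, fun h b => by
        constructor
        · exact fun hb => h b hb.2 hb.1
        · exact False.elim⟩
    have key2 : ∀ x : Finset (Fin n), ∀ d : Finset (Fin n),
        symmDiff (s x) {a} ∩ d = ∅ ↔ ∀ b ∈ d, (b ∈ s x ↔ b = a) := by
      intro x d
      simp only [Finset.ext_iff, Finset.mem_inter, Finset.notMem_empty, Finset.mem_symmDiff,
        Finset.mem_singleton]
      refine forall_congr' fun b => ?_
      tauto
    simp only [key2]
    simp only [key] at hu
    by_cases ha : a ∈ w \ u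
    · have haw := (Finset.mem_sdiff.1 ha).1
      have hau := (Finset.mem_sdiff.1 ha).2
      obtain ⟨x, ⟨hx1, hx2, hx3⟩, hx4⟩ := hu u w huw
      obtain ⟨y0, ⟨hy1, hy2, hy3⟩, hy4⟩ := hu u (w.erase a) (by grind)
      obtain ⟨y1, ⟨hz1, hz2, hz3⟩, hz4⟩ := hu (insert a u) w (by grind)
      by_cases hax : a ∈ x
      · have hxy : x = y1 := hz4 x ⟨by grind, hx2, by grind⟩
        have hay : a ∈ s y0 := by
          by_contra hc
          have := hx4 y0 ⟨hy1, by grind, by grind⟩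
          grind
        refine ⟨y0, ⟨hy1, by grind, by grind⟩, ?_⟩
        rintro z ⟨h1, h2, h3⟩
        by_cases haz : a ∈ z
        · have := hz4 z ⟨by grind, h2, by grind⟩
          grind
        · exact hy4 z ⟨h1, by grind, by grind⟩
      · have hxy : x = y0 := hy4 x ⟨hx1, by grind, by grind⟩
        have hay : a ∈ s y1 := by
          by_contra hc
          have := hx4 y1 ⟨by grind, hz2, by grind⟩
          grind
        refine ⟨y1, ⟨by grind, hz2, by grind⟩, ?_⟩
        rintro z ⟨h1, h2, h3⟩
        by_cases haz : a ∈ z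
        · exact hz4 z ⟨by grind, h2, by grind⟩
        · have := hy4 z ⟨h1, by grind, by grind⟩
          grind
    · obtain ⟨x, ⟨hx1, hx2, hx3⟩, hx4⟩ := hu u w huw
      refine ⟨x, ⟨hx1, hx2, by grind⟩, ?_⟩
      rintro z ⟨h1, h2, h3⟩
      exact hx4 z ⟨h1, h2, by grind⟩

theorem flip_all (n : ℕ) (s : Finset (Fin n) → Finset (Fin n)) (hs : IsUSO n s)
    (A : Finset (Fin n)) : IsUSO n (fun v => symmDiff (s v) A) := by
  induction A using Finset.induction_on with
  | empty =>
    have : (fun v => symmDiff (s v) ∅) = s := by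
      funext v
      exact symmDiff_bot (s v)
    rwa [this]
  | insert a A ha ih =>
    have := flip_one n _ ih a
    convert this using 2 with v
    rw [symmDiff_assoc]
    congr 1
    ext b
    simp only [Finset.mem_insert, Finset.mem_symmDiff, Finset.mem_singleton]
    by_cases h : b = a
    · subst h; tauto
    · tauto

theorem uso_injective (n : ℕ) (s : Finset (Fin n) → Finset (Fin n)) (hs : IsUSO n s) :
    Function.Injective s := by
  intro x y hxy
  have h := (flip_all n s hs (s x)).2 ∅ Finset.univ (Finset.subset_univ _)
  refine h.unique ⟨Finset.empty_subset _, Finset.subset_univ _, ?_⟩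
    ⟨Finset.empty_subset _, Finset.subset_univ _, ?_⟩
  · simp
  · simp [hxy]

/-- The sequence k ↦ s^[k](∅) of iterates of a USO outmap is periodic, with a
period l between 1 and 2^n. -/
theorem uso_iterate_periodic (n : ℕ)
    (s : Finset (Fin n) → Finset (Fin n)) (hs : IsUSO n s) :
    ∃ l : ℕ, 1 ≤ l ∧ l ≤ 2 ^ n ∧ ∀ k : ℕ, s^[k + l] ∅ = s^[k] ∅ := by
  have hi := uso_injective n s hs
  obtain ⟨i, j, hij, h⟩ := Fintype.exists_ne_map_eq_of_card_lt
    (fun k : Fin (2 ^ n + 1) => s^[k.1] ∅) (by simp)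
  wlog hlt : i < j generalizing i j
  · exact this j i hij.symm h.symm (by omega)
  have hlt' : i.1 < j.1 := hlt
  have h2 : s^[j.1 - i.1] ∅ = ∅ := by
    apply hi.iterate i.1
    rw [← Function.iterate_add_apply, Nat.add_sub_cancel' hlt'.le]
    exact h.symm
  refine ⟨j.1 - i.1, by omega, by omega, fun k => ?_⟩
  rw [Function.iterate_add_apply, h2]
end
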